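/- arXiv:1612.06212 — 4 statements merged into one kernel-verified Lean document; each statement's English description precedes it below -/
import Mathlib

section
/- Let T, k be natural numbers with k > 0, and let h, θ, η, w : ℕ → ℝ be real sequences satisfying, for every t with T < t ≤ T + k, the CFN component recurrence h(t) = θ(t) · tanh(h(t−1)) + η(t) · tanh(w(t)). Set Θ = max_{T ≤ t ≤ T+k} θ(t) and H = max_{T ≤ t ≤ T+k} η(t), and assume 0 ≤ θ(t) and 0 ≤ η(t) on this interval and Θ < 1. Then |h(T+k)| ≤ Θ^k · |h(T)| + (H / (1 − Θ)) · max_{T ≤ t ≤ T+k} |w(t)|. -/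
theorem cfn_tanh_le_aux (x : ℝ) (hx : 0 ≤ x) : |Real.tanh x| ≤ x := by
  have hmono : MonotoneOn (fun y : ℝ => y * Real.cosh y - Real.sinh y) (Set.Ici 0) := by
    have hd : ∀ y : ℝ, HasDerivAt (fun y : ℝ => y * Real.cosh y - Real.sinh y)
        (1 * Real.cosh y + y * Real.sinh y - Real.cosh y) y := fun y =>
      ((hasDerivAt_id y).mul (Real.hasDerivAt_cosh y)).sub (Real.hasDerivAt_sinh y)
    apply monotoneOn_of_deriv_nonneg (convex_Ici 0)
    · exact fun y _ => (hd y).continuousAt.continuousWithinAt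
    · exact fun y _ => (hd y).differentiableAt.differentiableWithinAt
    · intro y hy
      rw [interior_Ici] at hy
      rw [(hd y).deriv]
      have hy' : (0 : ℝ) ≤ y := le_of_lt hy
      have := mul_nonneg hy' (Real.sinh_nonneg_iff.mpr hy')
      linarith
  have h1 := hmono (Set.mem_Ici.mpr le_rfl) (Set.mem_Ici.mpr hx) hx
  simp only [Real.sinh_zero, zero_mul, sub_zero] at h1
  rw [Real.tanh_eq_sinh_div_cosh, abs_of_nonneg
    (div_nonneg (Real.sinh_nonneg_iff.mpr hx) (Real.cosh_pos x).le),
    div_le_iff₀ (Real.cosh_pos x)]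
  linarith

theorem cfn_abs_tanh_le (x : ℝ) : |Real.tanh x| ≤ |x| := by
  rcases le_total 0 x with hx | hx
  · rw [abs_of_nonneg hx]
    exact cfn_tanh_le_aux x hx
  · have := cfn_tanh_le_aux (-x) (by linarith)
    rw [Real.tanh_neg, abs_neg] at this
    rwa [abs_of_nonpos hx]

/-- Lemma 1 of the paper (CFN decay estimate, componentwise form):
if `h t = θ t * tanh (h (t-1)) + η t * tanh (w t)` on `(T, T+k]`, the gates are
nonnegative on `[T, T+k]`, and the maximum forget-gate value `Θ` on this interval
satisfies `Θ < 1`, then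
`|h (T+k)| ≤ Θ^k * |h T| + (H / (1 - Θ)) * max_{T ≤ t ≤ T+k} |w t|`,
where `H` is the maximum input-gate value on the interval. -/
theorem cfn_decay_estimate (T k : ℕ) (hk : 0 < k) (h θ η w : ℕ → ℝ)
    (hrec : ∀ t, T < t → t ≤ T + k →
      h t = θ t * Real.tanh (h (t - 1)) + η t * Real.tanh (w t))
    (hθ0 : ∀ t, T ≤ t → t ≤ T + k → 0 ≤ θ t)
    (hη0 : ∀ t, T ≤ t → t ≤ T + k → 0 ≤ η t)
    (Θ H : ℝ)
    (hΘ : Θ = (Finset.Icc T (T + k)).sup'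
      (Finset.nonempty_Icc.mpr (Nat.le_add_right T k)) θ)
    (hH : H = (Finset.Icc T (T + k)).sup'
      (Finset.nonempty_Icc.mpr (Nat.le_add_right T k)) η)
    (hΘ1 : Θ < 1) :
    |h (T + k)| ≤ Θ ^ k * |h T| +
      (H / (1 - Θ)) * ((Finset.Icc T (T + k)).sup'
        (Finset.nonempty_Icc.mpr (Nat.le_add_right T k)) (fun t => |w t|)) := by
  set M := (Finset.Icc T (T + k)).sup'
        (Finset.nonempty_Icc.mpr (Nat.le_add_right T k)) (fun t => |w t|) with hM
  have hθle : ∀ t, T ≤ t → t ≤ T + k → θ t ≤ Θ := fun t h1 h2 => by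
    rw [hΘ]; exact Finset.le_sup' θ (Finset.mem_Icc.mpr ⟨h1, h2⟩)
  have hηle : ∀ t, T ≤ t → t ≤ T + k → η t ≤ H := fun t h1 h2 => by
    rw [hH]; exact Finset.le_sup' η (Finset.mem_Icc.mpr ⟨h1, h2⟩)
  have hwle : ∀ t, T ≤ t → t ≤ T + k → |w t| ≤ M := fun t h1 h2 => by
    rw [hM]; exact Finset.le_sup' (fun t => |w t|) (Finset.mem_Icc.mpr ⟨h1, h2⟩)
  have hTT : T ≤ T + k := Nat.le_add_right T k
  have hΘ0 : 0 ≤ Θ := (hθ0 T le_rfl hTT).trans (hθle T le_rfl hTT)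
  have hH0 : 0 ≤ H := (hη0 T le_rfl hTT).trans (hηle T le_rfl hTT)
  have hM0 : 0 ≤ M := (abs_nonneg _).trans (hwle T le_rfl hTT)
  have hpos : 0 < 1 - Θ := by linarith
  have hC : Θ * (H / (1 - Θ) * M) + H * M = H / (1 - Θ) * M := by
    field_simp
    ring
  have hC0 : 0 ≤ H / (1 - Θ) * M := mul_nonneg (div_nonneg hH0 hpos.le) hM0
  have key : ∀ j, j ≤ k → |h (T + j)| ≤ Θ ^ j * |h T| + H / (1 - Θ) * M := by
    intro j
    induction j with
    | zero => intro _; simpa using hC0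
    | succ j ih =>
      intro hj
      have ihj := ih (by omega)
      have l1 : T ≤ T + (j + 1) := by omega
      have l2 : T + (j + 1) ≤ T + k := by omega
      have e := hrec (T + (j + 1)) (by omega) l2
      rw [show T + (j + 1) - 1 = T + j by omega] at e
      have a1 : |θ (T + (j + 1)) * Real.tanh (h (T + j))| ≤ Θ * |h (T + j)| := by
        rw [abs_mul, abs_of_nonneg (hθ0 _ l1 l2)]
        exact mul_le_mul (hθle _ l1 l2) (cfn_abs_tanh_le _) (abs_nonneg _) hΘ0
      have a2 : |η (T + (j + 1)) * Real.tanh (w (T + (j + 1)))| ≤ H * M := by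
        rw [abs_mul, abs_of_nonneg (hη0 _ l1 l2)]
        exact mul_le_mul (hηle _ l1 l2) ((cfn_abs_tanh_le _).trans (hwle _ l1 l2))
          (abs_nonneg _) hH0
      calc |h (T + (j + 1))| ≤ Θ * |h (T + j)| + H * M := by
            rw [e]; exact (abs_add_le _ _).trans (add_le_add a1 a2)
        _ ≤ Θ * (Θ ^ j * |h T| + H / (1 - Θ) * M) + H * M := by gcongr
        _ = Θ ^ (j + 1) * |h T| + (Θ * (H / (1 - Θ) * M) + H * M) := by ring
        _ = Θ ^ (j + 1) * |h T| + H / (1 - Θ) * M := by rw [hC]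
  exact key k le_rfl
end

section
/- Let T, k be natural numbers with k > 0, and let h, θ, η, w : ℕ → ℝ be real sequences satisfying, for every t with T < t ≤ T + k, the CFN component recurrence h(t) = θ(t) · tanh(h(t−1)) + η(t) · tanh(w(t)). Set Θ = max_{T ≤ t ≤ T+k} θ(t) and H = max_{T ≤ t ≤ T+k} η(t), and assume 0 ≤ θ(t) and 0 ≤ η(t) on this interval and Θ < 1. Then |h(T+k)| ≤ Θ^k · |h(T)| + ((1 − Θ^k)/(1 − Θ)) · H · max_{T ≤ t ≤ T+k} |w(t)|. -/
theorem cfn_tanh_aux (x : ℝ) (hx : 0 ≤ x) : 0 ≤ Real.tanh x ∧ Real.tanh x ≤ x := by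
  have hd : ∀ y : ℝ, HasDerivAt (fun y => y * Real.cosh y - Real.sinh y) (y * Real.sinh y) y := by
    intro y
    have := ((hasDerivAt_id y).mul (Real.hasDerivAt_cosh y)).sub (Real.hasDerivAt_sinh y)
    exact this.congr_deriv (by simp only [id]; ring)
  have hm : MonotoneOn (fun y => y * Real.cosh y - Real.sinh y) (Set.Ici 0) := by
    apply monotoneOn_of_deriv_nonneg (convex_Ici 0)
    · exact fun y _ => (hd y).continuousAt.continuousWithinAt
    · exact fun y _ => (hd y).differentiableAt.differentiableWithinAt
    · intro y hy
      rw [interior_Ici] at hy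
      rw [(hd y).deriv]
      have hy' : 0 ≤ y := le_of_lt hy
      exact mul_nonneg hy' (Real.sinh_nonneg_iff.mpr hy')
  have h1 := hm (Set.mem_Ici.mpr le_rfl) (Set.mem_Ici.mpr hx) hx
  simp at h1
  rw [Real.tanh_eq_sinh_div_cosh]
  exact ⟨div_nonneg (Real.sinh_nonneg_iff.mpr hx) (Real.cosh_pos x).le,
    (div_le_iff₀ (Real.cosh_pos x)).mpr h1⟩

/-- Sharper intermediate inequality from the proof of Lemma 1 of the paper:
under the CFN component recurrence on `(T, T+k]`, with nonnegative gates on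
`[T, T+k]` and maximal forget-gate value `Θ < 1`,
`|h (T+k)| ≤ Θ^k * |h T| + ((1 - Θ^k)/(1 - Θ)) * H * max_{T ≤ t ≤ T+k} |w t|`. -/
theorem cfn_decay_estimate_sharp (T k : ℕ) (hk : 0 < k) (h θ η w : ℕ → ℝ)
    (hrec : ∀ t, T < t → t ≤ T + k →
      h t = θ t * Real.tanh (h (t - 1)) + η t * Real.tanh (w t))
    (hθ0 : ∀ t, T ≤ t → t ≤ T + k → 0 ≤ θ t)
    (hη0 : ∀ t, T ≤ t → t ≤ T + k → 0 ≤ η t)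
    (Θ H : ℝ)
    (hΘ : Θ = (Finset.Icc T (T + k)).sup'
      (Finset.nonempty_Icc.mpr (Nat.le_add_right T k)) θ)
    (hH : H = (Finset.Icc T (T + k)).sup'
      (Finset.nonempty_Icc.mpr (Nat.le_add_right T k)) η)
    (hΘ1 : Θ < 1) :
    |h (T + k)| ≤ Θ ^ k * |h T| +
      ((1 - Θ ^ k) / (1 - Θ)) * H * ((Finset.Icc T (T + k)).sup'
        (Finset.nonempty_Icc.mpr (Nat.le_add_right T k)) (fun t => |w t|)) := by
  set M := (Finset.Icc T (T + k)).sup'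
        (Finset.nonempty_Icc.mpr (Nat.le_add_right T k)) (fun t => |w t|) with hM
  have hθ : ∀ t, T ≤ t → t ≤ T + k → θ t ≤ Θ := fun t h1 h2 => by
    rw [hΘ]; exact Finset.le_sup' θ (Finset.mem_Icc.mpr ⟨h1, h2⟩)
  have hη : ∀ t, T ≤ t → t ≤ T + k → η t ≤ H := fun t h1 h2 => by
    rw [hH]; exact Finset.le_sup' η (Finset.mem_Icc.mpr ⟨h1, h2⟩)
  have hw : ∀ t, T ≤ t → t ≤ T + k → |w t| ≤ M := fun t h1 h2 =>
    Finset.le_sup' (fun t => |w t|) (Finset.mem_Icc.mpr ⟨h1, h2⟩)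
  have hΘ0 : 0 ≤ Θ := (hθ0 T le_rfl (by omega)).trans (hθ T le_rfl (by omega))
  have hH0 : 0 ≤ H := (hη0 T le_rfl (by omega)).trans (hη T le_rfl (by omega))
  have hne : 1 - Θ ≠ 0 := by linarith
  clear_value M
  have key : ∀ n, n ≤ k → |h (T + n)| ≤ Θ ^ n * |h T| + ((1 - Θ ^ n) / (1 - Θ)) * H * M := by
    intro n
    induction n with
    | zero => intro _; simp
    | succ n ih =>
      intro hn
      have ih := ih (by omega)
      have hr := hrec (T + (n + 1)) (by omega) (by omega)
      rw [show T + (n + 1) - 1 = T + n by omega] at hr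
      have a1 := hθ0 (T + (n + 1)) (by omega) (by omega)
      have a2 := hη0 (T + (n + 1)) (by omega) (by omega)
      have b1 := hθ (T + (n + 1)) (by omega) (by omega)
      have b2 := hη (T + (n + 1)) (by omega) (by omega)
      have b3 := (cfn_abs_tanh_le _).trans (hw (T + (n + 1)) (by omega) (by omega))
      have b4 := (cfn_abs_tanh_le _).trans ih
      calc |h (T + (n + 1))|
          ≤ θ (T + (n + 1)) * |Real.tanh (h (T + n))|
            + η (T + (n + 1)) * |Real.tanh (w (T + (n + 1)))| := by
            rw [hr]
            refine (abs_add_le _ _).trans ?_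
            rw [abs_mul, abs_mul, abs_of_nonneg a1, abs_of_nonneg a2]
        _ ≤ Θ * (Θ ^ n * |h T| + ((1 - Θ ^ n) / (1 - Θ)) * H * M) + H * M :=
            add_le_add (mul_le_mul b1 b4 (abs_nonneg _) hΘ0)
              (mul_le_mul b2 b3 (abs_nonneg _) hH0)
        _ = _ := by
            field_simp
            ring
  exact key k le_rfl
end

section
/- Let h, θ, η, w : ℕ → ℝ be real sequences satisfying, for every t > T, the CFN component recurrence h(t) = θ(t) · tanh(h(t−1)) + η(t) · tanh(w(t)), and suppose w(t) = 0 for all t > T while 0 ≤ θ(t) ≤ Θ with Θ < 1 for all t > T. Then |h(T+k)| ≤ Θ^k · |h(T)| for every k ≥ 0; in particular h(t) → 0 as t → ∞. -/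
theorem cfn_sinh_le_mul_cosh {x : ℝ} (hx : 0 ≤ x) : Real.sinh x ≤ x * Real.cosh x := by
  have hd : ∀ y : ℝ, HasDerivAt (fun y => y * Real.cosh y - Real.sinh y) (y * Real.sinh y) y := by
    intro y
    have := ((hasDerivAt_id y).mul (Real.hasDerivAt_cosh y)).sub (Real.hasDerivAt_sinh y)
    have e : y * Real.sinh y = 1 * Real.cosh y + id y * Real.sinh y - Real.cosh y := by
      simp only [id]
      ring
    rw [e]
    exact this
  have hm : MonotoneOn (fun y => y * Real.cosh y - Real.sinh y) (Set.Ici 0) := by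
    apply monotoneOn_of_deriv_nonneg (convex_Ici 0)
    · exact fun y _ => (hd y).continuousAt.continuousWithinAt
    · exact fun y _ => (hd y).differentiableAt.differentiableWithinAt
    · intro y hy
      rw [interior_Ici] at hy
      rw [(hd y).deriv]
      exact mul_nonneg (le_of_lt hy) (Real.sinh_nonneg_iff.2 (le_of_lt hy))
  have := hm (Set.mem_Ici.2 le_rfl) (Set.mem_Ici.2 hx) hx
  simp at this
  linarith

/-- Once the embedded input feature vanishes (for `t > T`), the CFN hidden
component relaxes geometrically to zero: `|h (T+k)| ≤ Θ^k * |h T|` for every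
`k ≥ 0`, and in particular `h t → 0` as `t → ∞`. -/
theorem cfn_relaxation_to_zero (T : ℕ) (h θ η w : ℕ → ℝ) (Θ : ℝ)
    (hrec : ∀ t, T < t →
      h t = θ t * Real.tanh (h (t - 1)) + η t * Real.tanh (w t))
    (hw : ∀ t, T < t → w t = 0)
    (hθ : ∀ t, T < t → 0 ≤ θ t ∧ θ t ≤ Θ)
    (hΘ1 : Θ < 1) :
    (∀ k : ℕ, |h (T + k)| ≤ Θ ^ k * |h T|) ∧
      Filter.Tendsto h Filter.atTop (nhds 0) := by
  have hΘ0 : 0 ≤ Θ := (hθ (T + 1) (by omega)).1.trans (hθ (T + 1) (by omega)).2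
  have hb : ∀ k : ℕ, |h (T + k)| ≤ Θ ^ k * |h T| := by
    intro k
    induction k with
    | zero => simp
    | succ k ih =>
      have hlt : T < T + (k + 1) := by omega
      have h1 : T + (k + 1) - 1 = T + k := by omega
      obtain ⟨h2, h3⟩ := hθ _ hlt
      rw [hrec _ hlt, hw _ hlt, h1, Real.tanh_zero, mul_zero, add_zero, abs_mul,
        abs_of_nonneg h2, pow_succ', mul_assoc]
      exact mul_le_mul h3 ((cfn_abs_tanh_le _).trans ih) (abs_nonneg _) hΘ0
  refine ⟨hb, ?_⟩
  rw [← Filter.tendsto_add_atTop_iff_nat T]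
  apply squeeze_zero_norm (a := fun k => Θ ^ k * |h T|)
  · intro k
    rw [Real.norm_eq_abs, add_comm]
    exact hb k
  · simpa using (tendsto_pow_atTop_nhds_zero_of_lt_one hΘ0 hΘ1).mul_const |h T|
end

section
/- Let n be a positive natural number, U a real n × n matrix, and b : Fin n → ℝ. Define Φ : (Fin n → ℝ) → (Fin n → ℝ) by Φ(u)(i) = σ((U · u + b)(i)) · tanh(u(i)), where σ(x) = 1/(1 + exp(−x)). Let u : ℕ → (Fin n → ℝ) be a trajectory, u_{t+1} = Φ(u_t), and suppose C > 0 is such that (U · u_t + b)(i) < C for all t and all i. Then |u_{t+1}(i)| ≤ σ(C) · |u_t(i)| for all t and all components i, and 0 < σ(C) < 1. -/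
theorem cfn_tanh_le_self {x : ℝ} (hx : 0 ≤ x) : Real.tanh x ≤ x := by
  have hd : ∀ y : ℝ, HasDerivAt (fun y => y * Real.cosh y - Real.sinh y) (y * Real.sinh y) y := by
    intro y
    have h := ((hasDerivAt_id y).mul (Real.hasDerivAt_cosh y)).sub (Real.hasDerivAt_sinh y)
    refine h.congr_deriv ?_
    simp only [id]
    ring
  have hm : MonotoneOn (fun y => y * Real.cosh y - Real.sinh y) (Set.Ici (0 : ℝ)) := by
    apply monotoneOn_of_deriv_nonneg (convex_Ici 0)
    · exact fun y _ => (hd y).continuousAt.continuousWithinAt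
    · exact fun y _ => (hd y).differentiableAt.differentiableWithinAt
    · intro y hy
      rw [interior_Ici] at hy
      rw [(hd y).deriv]
      exact mul_nonneg (le_of_lt hy) (Real.sinh_nonneg_iff.2 (le_of_lt hy))
  have h := hm (Set.mem_Ici.2 le_rfl) (Set.mem_Ici.2 hx) hx
  simp only [Real.sinh_zero, zero_mul, sub_zero] at h
  rw [Real.tanh_eq_sinh_div_cosh, div_le_iff₀ (Real.cosh_pos x)]
  linarith

theorem cfn_tanh_nonneg {x : ℝ} (hx : 0 ≤ x) : 0 ≤ Real.tanh x := by
  rw [Real.tanh_eq_sinh_div_cosh]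
  exact div_nonneg (Real.sinh_nonneg_iff.2 hx) (Real.cosh_pos x).le

/-- Per-step contraction estimate from the proof of Lemma 2 of the paper:
along a trajectory `u (t+1) = Φ (u t)` of the CFN-induced dynamical system
`Φ(u)(i) = σ((U·u + b)(i)) * tanh(u(i))`, if `C > 0` bounds every component of
the sigmoid argument, i.e. `(U·u_t + b)(i) < C` for all `t, i`, then
`|u_{t+1}(i)| ≤ σ(C) * |u_t(i)|` for all `t, i`, and `0 < σ(C) < 1`. -/
theorem cfn_per_step_contraction (n : ℕ) (hn : 0 < n)
    (U : Matrix (Fin n) (Fin n) ℝ) (b : Fin n → ℝ)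
    (Φ : (Fin n → ℝ) → (Fin n → ℝ))
    (hΦ : ∀ u i, Φ u i = (1 / (1 + Real.exp (-(U.mulVec u + b) i))) * Real.tanh (u i))
    (u : ℕ → (Fin n → ℝ))
    (hu : ∀ t, u (t + 1) = Φ (u t))
    (C : ℝ) (hC : 0 < C)
    (hbound : ∀ t i, (U.mulVec (u t) + b) i < C) :
    (∀ t i, |u (t + 1) i| ≤ (1 / (1 + Real.exp (-C))) * |u t i|) ∧
      0 < 1 / (1 + Real.exp (-C)) ∧ 1 / (1 + Real.exp (-C)) < 1 := by
  have hp := Real.exp_pos (-C)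
  refine ⟨?_, by positivity, ?_⟩
  · intro t i
    rw [hu, hΦ, abs_mul, abs_of_pos (by positivity)]
    apply mul_le_mul _ (cfn_abs_tanh_le _) (abs_nonneg _) (by positivity)
    apply one_div_le_one_div_of_le (by positivity)
    have := Real.exp_le_exp.2 (neg_le_neg (hbound t i).le)
    linarith
  · rw [div_lt_one (by positivity)]
    linarith
end
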